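/- Deleting the first letter gives a bijection between {π ∈ S_n : π avoids 23-1, π_1 = a, π_2 = b} with a > b and {τ ∈ S_{n−1} : τ avoids 23-1, τ_1 = b}, for any 1 ≤ b < a ≤ n. -/

import Mathlib

/-- The positions of the prefix indices `R` inside `Fin n`. -/
def prefIndices {n k : ℕ} (h : k ≤ n) (R : Finset (Fin k)) : Finset (Fin n) :=
  R.map (Fin.castLEEmb h)

/-- The deletion map `d_R`: delete the letters of `π` at the (prefix) positions in `R`
and reduce, yielding a permutation of length `n - |R|`. -/
def deletePerm {n k : ℕ} (h : k ≤ n) (R : Finset (Fin k)) (π : Equiv.Perm (Fin n)) :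
    Equiv.Perm (Fin (n - R.card)) :=
  ((prefIndices h R)ᶜ.orderIsoOfFin
      (by simp [prefIndices, Finset.card_compl])).toEquiv.trans
    ((π.subtypeEquiv (fun x => by
        simp [prefIndices, Finset.mem_compl, Finset.mem_image])).trans
      (((prefIndices h R).image π)ᶜ.orderIsoOfFin
        (by simp [prefIndices, Finset.card_compl,
              Finset.card_image_of_injective _ π.injective])).toEquiv.symm)

/-- Containment of 23-1. -/
def Contains23d1 {n : ℕ} (π : Equiv.Perm (Fin n)) : Prop :=
  ∃ (i j : Fin n) (h : (i : ℕ) + 1 < n), (i : ℕ) + 1 < (j : ℕ) ∧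
    π j < π i ∧ π i < π ⟨(i : ℕ) + 1, h⟩

theorem key_delete_aux {n : ℕ} (hn : 0 < n) (R : Finset (Fin n)) (hR : R = {(⟨0, hn⟩ : Fin n)})
    (π : Equiv.Perm (Fin n)) (k : Fin (n - R.card)) (hk : (k : ℕ) + 1 < n) :
    ((π ⟨(k : ℕ) + 1, hk⟩ : Fin n) : ℕ) =
      if ((deletePerm (le_refl n) R π k : Fin _) : ℕ) < (π ⟨0, hn⟩ : Fin n)
      then ((deletePerm (le_refl n) R π k : Fin _) : ℕ)
      else ((deletePerm (le_refl n) R π k : Fin _) : ℕ) + 1 := by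
  have hc : R.card = 1 := by simp [hR]
  have h1 : (prefIndices (le_refl n) R)ᶜ.card = n - R.card := by
    simp [prefIndices, Finset.card_compl]
  have h2 : ((prefIndices (le_refl n) R).image π)ᶜ.card = n - R.card := by
    simp [prefIndices, Finset.card_compl, Finset.card_image_of_injective _ π.injective]
  have e1 := Finset.orderEmbOfFin_unique h1
    (f := fun x : Fin (n - R.card) => (⟨(x : ℕ) + 1, by omega⟩ : Fin n))
    (by intro x; simp [prefIndices, hR, Fin.ext_iff])
    (by intro x y hxy; rw [Fin.lt_def] at hxy ⊢; dsimp only; omega)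
  have e2 := Finset.orderEmbOfFin_unique h2
    (f := fun x : Fin (n - R.card) =>
      (⟨if (x : ℕ) < (π ⟨0, hn⟩ : Fin n) then (x : ℕ) else (x : ℕ) + 1,
        by split_ifs <;> omega⟩ : Fin n))
    (by
      intro x
      simp only [prefIndices, hR, Finset.map_singleton, Finset.image_singleton,
        Finset.mem_compl, Finset.mem_singleton, Fin.ext_iff]
      have : ((π (Fin.castLEEmb (le_refl n) ⟨0, hn⟩) : Fin n) : ℕ) = (π ⟨0, hn⟩ : Fin n) := rfl
      rw [this]
      split_ifs <;> omega)
    (by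
      intro x y hxy
      rw [Fin.lt_def] at hxy ⊢
      dsimp only
      split_ifs <;> omega)
  have e3 : ((prefIndices (le_refl n) R).image π)ᶜ.orderEmbOfFin h2
      (deletePerm (le_refl n) R π k) =
      π ((prefIndices (le_refl n) R)ᶜ.orderEmbOfFin h1 k) := by
    rw [← Finset.coe_orderIsoOfFin_apply, ← Finset.coe_orderIsoOfFin_apply]
    simp [deletePerm]
  rw [← e1, ← e2] at e3
  exact (congrArg Fin.val e3).symm

theorem key_delete {n : ℕ} (hn : 0 < n) (π : Equiv.Perm (Fin n))
    (k : Fin (n - ({(⟨0, hn⟩ : Fin n)} : Finset (Fin n)).card)) (hk : (k : ℕ) + 1 < n) :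
    ((π ⟨(k : ℕ) + 1, hk⟩ : Fin n) : ℕ) =
      if ((deletePerm (le_refl n) {(⟨0, hn⟩ : Fin n)} π k : Fin _) : ℕ) < (π ⟨0, hn⟩ : Fin n)
      then ((deletePerm (le_refl n) {(⟨0, hn⟩ : Fin n)} π k : Fin _) : ℕ)
      else ((deletePerm (le_refl n) {(⟨0, hn⟩ : Fin n)} π k : Fin _) : ℕ) + 1 :=
  key_delete_aux hn _ rfl π k hk

theorem contains_iff {n : ℕ} (hn : 1 < n) (π : Equiv.Perm (Fin n))
    (h : π ⟨1, hn⟩ < π ⟨0, by omega⟩) :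
    Contains23d1 (deletePerm (le_refl n) {(⟨0, by omega⟩ : Fin n)} π) ↔ Contains23d1 π := by
  have key := key_delete (by omega : 0 < n) π
  have hc : ({(⟨0, by omega⟩ : Fin n)} : Finset (Fin n)).card = 1 := by simp
  constructor
  · rintro ⟨i, j, hi, hij, h1, h2⟩
    have ki := key i (by omega)
    have kj := key j (by omega)
    have ki' := key ⟨i + 1, hi⟩ (by dsimp only; omega)
    refine ⟨⟨i + 1, by omega⟩, ⟨j + 1, by omega⟩, by dsimp only; omega,
      by dsimp only; omega, ?_, ?_⟩
    · rw [Fin.lt_def] at *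
      split_ifs at ki kj ki' <;> omega
    · rw [Fin.lt_def] at *
      dsimp only at *
      split_ifs at ki kj ki' <;> omega
  · rintro ⟨⟨i, hi0⟩, ⟨j, hj0⟩, hi, hij, h1, h2⟩
    dsimp only at *
    obtain _ | i := i
    · exact absurd h2 (not_lt.mpr h.le)
    obtain _ | j := j
    · omega
    have ki := key ⟨i, by omega⟩ (by dsimp only; omega)
    have kj := key ⟨j, by omega⟩ (by dsimp only; omega)
    have ki' := key ⟨i + 1, by omega⟩ (by dsimp only; omega)
    refine ⟨⟨i, by omega⟩, ⟨j, by omega⟩, by dsimp only; omega, by dsimp only; omega, ?_, ?_⟩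
    · rw [Fin.lt_def] at *
      dsimp only at *
      split_ifs at ki kj ki' <;> omega
    · rw [Fin.lt_def] at *
      dsimp only at *
      split_ifs at ki kj ki' <;> omega

/-- Deleting the first letter is a bijection from the `23-1`-avoiding permutations of
length `n` with `π₁ = a, π₂ = b`, `a > b`, to those of length `n-1` with first letter
`b` (letters written 1-based; here encoded 0-based in `Fin`). -/
theorem stmt14 {n a b : ℕ} (hb : 1 ≤ b) (hba : b < a) (han : a ≤ n) :
    Set.BijOn (deletePerm (le_refl n) {(⟨0, by omega⟩ : Fin n)})
      {π : Equiv.Perm (Fin n) | ¬ Contains23d1 π ∧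
        π ⟨0, by omega⟩ = ⟨a - 1, by omega⟩ ∧ π ⟨1, by omega⟩ = ⟨b - 1, by omega⟩}
      {τ : Equiv.Perm (Fin (n - ({(⟨0, by omega⟩ : Fin n)} : Finset (Fin n)).card)) |
        ¬ Contains23d1 τ ∧
        τ ⟨0, by simp only [Finset.card_singleton]; omega⟩ =
          ⟨b - 1, by simp only [Finset.card_singleton]; omega⟩} := by
  have hn : 0 < n := by omega
  have hc : ({(⟨0, by omega⟩ : Fin n)} : Finset (Fin n)).card = 1 := by simp
  have first : ∀ π : Equiv.Perm (Fin n), π ⟨0, hn⟩ = ⟨a - 1, by omega⟩ →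
      (π ⟨1, by omega⟩ = ⟨b - 1, by omega⟩ ↔
        deletePerm (le_refl n) {(⟨0, hn⟩ : Fin n)} π ⟨0, by omega⟩ = ⟨b - 1, by omega⟩) := by
    intro π h0
    have k0 : ((π ⟨1, by omega⟩ : Fin n) : ℕ) = _ := key_delete hn π ⟨0, by omega⟩ (by dsimp only; omega)
    have h0' := congrArg Fin.val h0
    rw [Fin.ext_iff, Fin.ext_iff]
    dsimp only at *
    split_ifs at k0 <;> omega
  refine ⟨?_, ?_, ?_⟩
  · rintro π ⟨h1, h2, h3⟩
    refine ⟨?_, (first π h2).1 h3⟩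
    rwa [contains_iff (by omega) π (by rw [h2, h3, Fin.lt_def]; dsimp only; omega)]
  · rintro π ⟨-, h2, -⟩ σ ⟨-, h2', -⟩ heq
    ext ⟨x, hx⟩
    obtain _ | x := x
    · rw [h2, h2']
    · have k1 := key_delete hn π ⟨x, by omega⟩ hx
      have k2 := key_delete hn σ ⟨x, by omega⟩ hx
      rw [h2, heq] at k1
      rw [h2'] at k2
      exact k1.trans k2.symm
  · rintro τ ⟨h1, h2⟩
    let f : Fin n → Fin n := fun x =>
      if hx : (x : ℕ) = 0 then ⟨a - 1, by omega⟩ else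
        ⟨if ((τ ⟨x - 1, by omega⟩ : Fin _) : ℕ) < a - 1 then (τ ⟨x - 1, by omega⟩ : Fin _)
          else (τ ⟨x - 1, by omega⟩ : Fin _) + 1, by split_ifs <;> omega⟩
    have hf : Function.Injective f := by
      intro x y hxy
      have hv := congrArg Fin.val hxy
      by_cases hx : (x : ℕ) = 0 <;> by_cases hy : (y : ℕ) = 0
      · exact Fin.ext (by omega)
      · simp only [f, hx, hy, dif_pos, dif_neg, not_false_eq_true] at hv
        split_ifs at hv <;> omega
      · simp only [f, hx, hy, dif_pos, dif_neg, not_false_eq_true] at hv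
        split_ifs at hv <;> omega
      · simp only [f, hx, hy, dif_neg, not_false_eq_true] at hv
        have ht : τ ⟨x - 1, by omega⟩ = τ ⟨y - 1, by omega⟩ := by
          apply Fin.ext
          split_ifs at hv <;> omega
        have := congrArg Fin.val (τ.injective ht)
        dsimp only at this
        exact Fin.ext (by omega)
    let π : Equiv.Perm (Fin n) := Equiv.ofBijective f (Finite.injective_iff_bijective.mp hf)
    have hπ : ∀ x, π x = f x := fun x => Equiv.ofBijective_apply f _ x
    have hπ0 : π ⟨0, hn⟩ = ⟨a - 1, by omega⟩ := by
      rw [hπ]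
      simp [f]
    have hd : deletePerm (le_refl n) {(⟨0, hn⟩ : Fin n)} π = τ := by
      ext k
      have kk := key_delete hn π k (by omega)
      have kf : ((π ⟨(k : ℕ) + 1, by omega⟩ : Fin n) : ℕ) =
          if ((τ k : Fin _) : ℕ) < a - 1 then ((τ k : Fin _) : ℕ) else (τ k : Fin _) + 1 := by
        rw [hπ]
        simp [f]
      rw [hπ0] at kk
      dsimp only at kk
      split_ifs at kk kf <;> omega
    have hπ1 : π ⟨1, by omega⟩ = ⟨b - 1, by omega⟩ := by
      rw [first π hπ0, hd]
      exact h2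
    refine ⟨π, ⟨?_, hπ0, hπ1⟩, hd⟩
    rw [← contains_iff (by omega) π (by rw [hπ0, hπ1, Fin.lt_def]; dsimp only; omega), hd]
    exact h1
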